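/- Let n ≥ 2, p ≥ 2, let Ω ⊆ ℝⁿ be open, and let u : Ω → ℝ^p be an energy minimizing map into the unit sphere S^{p−1} with weak gradient g. Then for every y ∈ Ω and ρ₀ > 0 with the closed ball B̄_{ρ₀}(y) ⊂ Ω, and every 0 < σ < ρ < ρ₀, the monotonicity identity holds: ρ^{2−n} ∫_{B_ρ(y)} |Du|² − σ^{2−n} ∫_{B_σ(y)} |Du|² = 2 ∫_{B_ρ(y)∖B_σ(y)} |x−y|^{2−n} ‖g(x)((x−y)/|x−y|)‖² dx. In particular ρ ↦ ρ^{2−n} ∫_{B_ρ(y)} |Du|² is monotone nondecreasing. -/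

import Mathlib

open MeasureTheory Metric Filter Set

noncomputable section

/-- The pointwise energy density `|Du|²(x) = ∑_{i,j} ((g(x)eᵢ)_j)²` associated to a
(weak) gradient `g`. -/
def energyDensity (n p : ℕ)
    (g : EuclideanSpace ℝ (Fin n) →
      (EuclideanSpace ℝ (Fin n) →L[ℝ] EuclideanSpace ℝ (Fin p)))
    (x : EuclideanSpace ℝ (Fin n)) : ℝ :=
  ∑ i : Fin n, ∑ j : Fin p, (g x (EuclideanSpace.single i 1) j) ^ 2

/-- `u` has weak gradient `g` on `Ω`: both are locally integrable on `Ω` and the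
integration-by-parts identity holds against every smooth compactly supported test
function with support in `Ω`. -/
def HasWeakGradient (n p : ℕ) (Ω : Set (EuclideanSpace ℝ (Fin n)))
    (u : EuclideanSpace ℝ (Fin n) → EuclideanSpace ℝ (Fin p))
    (g : EuclideanSpace ℝ (Fin n) →
      (EuclideanSpace ℝ (Fin n) →L[ℝ] EuclideanSpace ℝ (Fin p))) : Prop :=
  LocallyIntegrableOn u Ω volume ∧ LocallyIntegrableOn g Ω volume ∧
  ∀ φ : EuclideanSpace ℝ (Fin n) → ℝ, ContDiff ℝ (⊤ : ℕ∞) φ → HasCompactSupport φ →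
    tsupport φ ⊆ Ω → ∀ i : Fin n, ∀ j : Fin p,
      ∫ x in Ω, u x j * fderiv ℝ φ x (EuclideanSpace.single i 1) =
        - ∫ x in Ω, φ x * g x (EuclideanSpace.single i 1) j

/-- `u : Ω → ℝᵖ` is an energy minimizing map into the unit sphere `S^(p-1)` with weak
gradient `g`: `u` has weak gradient `g` with locally integrable energy density,
`‖u‖ = 1` a.e. on `Ω`, and `u` minimizes energy in every ball `B_ρ(y)` with closure in
`Ω` among sphere-valued competitors `w` agreeing with `u` a.e. outside a smaller
concentric ball. -/
def IsEnergyMinimizingToSphere (n p : ℕ) (Ω : Set (EuclideanSpace ℝ (Fin n)))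
    (u : EuclideanSpace ℝ (Fin n) → EuclideanSpace ℝ (Fin p))
    (g : EuclideanSpace ℝ (Fin n) →
      (EuclideanSpace ℝ (Fin n) →L[ℝ] EuclideanSpace ℝ (Fin p))) : Prop :=
  HasWeakGradient n p Ω u g ∧
  LocallyIntegrableOn (energyDensity n p g) Ω volume ∧
  (∀ᵐ x ∂volume.restrict Ω, ‖u x‖ = 1) ∧
  ∀ (y : EuclideanSpace ℝ (Fin n)) (ρ : ℝ), 0 < ρ → closedBall y ρ ⊆ Ω →
    ∀ (w : EuclideanSpace ℝ (Fin n) → EuclideanSpace ℝ (Fin p))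
      (h : EuclideanSpace ℝ (Fin n) →
        (EuclideanSpace ℝ (Fin n) →L[ℝ] EuclideanSpace ℝ (Fin p))),
      HasWeakGradient n p Ω w h →
      LocallyIntegrableOn (energyDensity n p h) Ω volume →
      (∀ᵐ x ∂volume.restrict Ω, ‖w x‖ = 1) →
      (∃ σ : ℝ, σ < ρ ∧ ∀ᵐ x ∂volume.restrict (Ω \ ball y σ), w x = u x) →
      ∫ x in ball y ρ, energyDensity n p g x ≤ ∫ x in ball y ρ, energyDensity n p h x

/-- The regular set of `u`: points of `Ω` having an open neighborhood (inside `Ω`) on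
which `u` agrees almost everywhere with a `C^∞` map. -/
def regSet (n p : ℕ) (Ω : Set (EuclideanSpace ℝ (Fin n)))
    (u : EuclideanSpace ℝ (Fin n) → EuclideanSpace ℝ (Fin p)) :
    Set (EuclideanSpace ℝ (Fin n)) :=
  {x | x ∈ Ω ∧ ∃ V : Set (EuclideanSpace ℝ (Fin n)), IsOpen V ∧ x ∈ V ∧ V ⊆ Ω ∧
    ∃ v : EuclideanSpace ℝ (Fin n) → EuclideanSpace ℝ (Fin p),
      ContDiffOn ℝ (⊤ : ℕ∞) v V ∧ ∀ᵐ z ∂volume.restrict V, u z = v z}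

/-
Composing `u` with diffeomorphisms of the domain yields sphere-valued competitors, so `u` is
stationary under every inner variation. Apply this, after smoothing, to the radial field
`η(|x - y|²) (x - y)` with `η(s) = ∫_s^{ρ²} θ` and `θ(t) = t ^ (-n / 2) / 2` on `[σ², ρ²)`, zero
elsewhere. For this `θ` the coefficient of `|Du|²` in the first variation is the constant
`σ ^ (2 - n) - ρ ^ (2 - n)` on `B_σ` and collapses to the constant `-ρ ^ (2 - n)` on `B_ρ ∖ B_σ`,
where the only other term is the radial one.
-/

open scoped ContDiff Manifold RealInnerProductSpace Topology

section TraceDet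

variable {E : Type*} [NormedAddCommGroup E] [NormedSpace ℝ E] [FiniteDimensional ℝ E]

/-- The trace of endomorphisms of a finite-dimensional real normed space, as a continuous linear
functional. -/
def traceCLM (E : Type*) [NormedAddCommGroup E] [NormedSpace ℝ E] [FiniteDimensional ℝ E] :
    (E →L[ℝ] E) →L[ℝ] ℝ :=
  (LinearMap.trace ℝ E ∘ₗ ContinuousLinearMap.coeLM ℝ).toContinuousLinearMap

theorem traceCLM_apply (A : E →L[ℝ] E) : traceCLM E A = LinearMap.trace ℝ E A := rfl

theorem traceCLM_eq_sum_repr {ι : Type*} [Fintype ι] (b : Module.Basis ι ℝ E) (A : E →L[ℝ] E) :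
    traceCLM E A = ∑ k, b.repr (A (b k)) k := by
  classical
  rw [traceCLM_apply, LinearMap.trace_eq_matrix_trace ℝ b, Matrix.trace]
  simp only [Matrix.diag_apply, LinearMap.toMatrix_apply, ContinuousLinearMap.coe_coe]

theorem traceCLM_id : traceCLM E (ContinuousLinearMap.id ℝ E) = Module.finrank ℝ E :=
  LinearMap.trace_id ℝ E

theorem traceCLM_smulRight (ℓ : E →L[ℝ] ℝ) (v : E) : traceCLM E (ℓ.smulRight v) = ℓ v :=
  LinearMap.trace_smulRight (ℓ : E →ₗ[ℝ] ℝ) v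

theorem contDiff_continuousLinearMap_det {n : ℕ∞ω} :
    ContDiff ℝ n (fun A : E →L[ℝ] E => A.det) := by
  classical
  let b := Module.finBasis ℝ E
  have hdet : (fun A : E →L[ℝ] E => A.det) = fun A : E →L[ℝ] E =>
      ∑ s : Equiv.Perm (Fin (Module.finrank ℝ E)),
        ((Equiv.Perm.sign s : ℤ) : ℝ) * ∏ i, (b.coord (s i)).toContinuousLinearMap (A (b i)) := by
    ext A
    rw [ContinuousLinearMap.det, ← LinearMap.det_toMatrix b, Matrix.det_apply']
    simp [LinearMap.toMatrix_apply]
  rw [hdet]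
  exact ContDiff.sum fun s _ => contDiff_const.mul <| contDiff_prod fun i _ =>
    (ContinuousLinearMap.contDiff _).comp (contDiff_id.clm_apply contDiff_const)

theorem hasFDerivAt_det_id :
    HasFDerivAt (fun A : E →L[ℝ] E => A.det) (traceCLM E) (ContinuousLinearMap.id ℝ E) := by
  classical
  let b := Module.finBasis ℝ E
  have hdiff : DifferentiableAt ℝ (fun A : E →L[ℝ] E => A.det) (ContinuousLinearMap.id ℝ E) :=
    (contDiff_continuousLinearMap_det (n := 1)).differentiable one_ne_zero _
  suffices h : fderiv ℝ (fun A : E →L[ℝ] E => A.det) (.id ℝ E) = traceCLM E from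
    h ▸ hdiff.hasFDerivAt
  ext T
  have hline : HasDerivAt (fun t : ℝ => (ContinuousLinearMap.id ℝ E + t • T).det)
      (traceCLM E T) 0 := by
    set M := LinearMap.toMatrix b b (T : E →ₗ[ℝ] E)
    set p : Polynomial ℝ := (1 + (Polynomial.X : Polynomial ℝ) • M.map Polynomial.C).det.divX.divX
    have hdet (t : ℝ) :
        (ContinuousLinearMap.id ℝ E + t • T).det = 1 + M.trace * t + p.eval t * t ^ 2 := by
      rw [ContinuousLinearMap.det, ← LinearMap.det_toMatrix b, ← Matrix.det_one_add_smul]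
      simp [M]
    rw [funext hdet]
    refine ((((hasDerivAt_id (0 : ℝ)).const_mul M.trace).const_add 1).add
      ((p.hasDerivAt 0).mul (hasDerivAt_pow 2 (0 : ℝ)))).congr_deriv ?_
    simp [M, traceCLM_apply, LinearMap.trace_eq_matrix_trace ℝ b]
  exact ((hdiff.hasFDerivAt.comp_hasDerivAt_of_eq (0 : ℝ)
    (((hasDerivAt_id (0 : ℝ)).smul_const T).const_add _) (by simp)).unique hline).symm ▸ by simp

end TraceDet

section Divergence

variable {E : Type*} [NormedAddCommGroup E] [NormedSpace ℝ E] [FiniteDimensional ℝ E]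

/-- The divergence of a vector field on a finite-dimensional normed space, as the trace of its
derivative. -/
def divergence (X : E → E) (x : E) : ℝ := traceCLM E (fderiv ℝ X x)

theorem continuous_divergence {X : E → E} (hX : ContDiff ℝ 1 X) :
    Continuous (divergence X) :=
  (traceCLM E).continuous.comp (hX.continuous_fderiv one_ne_zero)

theorem divergence_smul_const {f : E → ℝ} {x : E} (hf : DifferentiableAt ℝ f x) (v : E) :
    divergence (fun z => f z • v) x = fderiv ℝ f x v := by
  rw [divergence, fderiv_smul_const hf, traceCLM_smulRight]

variable [MeasurableSpace E] [BorelSpace E] {μ : Measure E} [μ.IsAddHaarMeasure]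

theorem integral_mul_divergence {f : E → ℝ} {X : E → E} (hf : ContDiff ℝ 1 f)
    (hfc : HasCompactSupport f) (hX : ContDiff ℝ 1 X) :
    ∫ x, f x * divergence X x ∂μ = -∫ x, fderiv ℝ f x (X x) ∂μ := by
  let b := Module.finBasis ℝ E
  let c (k) : E →L[ℝ] ℝ := (b.coord k).toContinuousLinearMap
  have hcX (k) : ContDiff ℝ 1 (c k ∘ X) := (c k).contDiff.comp hX
  have hf' := hf.continuous_fderiv one_ne_zero
  have hdiv (x : E) : f x * divergence X x = ∑ k, f x * fderiv ℝ (c k ∘ X) x (b k) := by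
    rw [divergence, traceCLM_eq_sum_repr b, Finset.mul_sum]
    simp_rw [fderiv_comp x (c _).differentiableAt (hX.differentiable one_ne_zero x),
      ContinuousLinearMap.fderiv]
    rfl
  have hexp (x : E) : fderiv ℝ f x (X x) = ∑ k, fderiv ℝ f x (b k) * (c k ∘ X) x := by
    conv_lhs => rw [← b.sum_repr (X x), map_sum]
    exact Finset.sum_congr rfl fun k _ => by rw [map_smul, smul_eq_mul, mul_comm]; rfl
  have hint (k) : Integrable (fun x => fderiv ℝ f x (b k) * (c k ∘ X) x) μ :=
    ((hf'.clm_apply continuous_const).mul (hcX k).continuous).integrable_of_hasCompactSupport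
      (hfc.fderiv_apply ℝ (b k)).mul_right
  have hint' (k) : Integrable (fun x => f x * fderiv ℝ (c k ∘ X) x (b k)) μ :=
    (hf.continuous.mul (((hcX k).continuous_fderiv one_ne_zero).clm_apply
      continuous_const)).integrable_of_hasCompactSupport hfc.mul_right
  simp_rw [hdiv, hexp]
  rw [integral_finsetSum _ fun k _ => hint' k, integral_finsetSum _ fun k _ => hint k,
    ← Finset.sum_neg_distrib]
  refine Finset.sum_congr rfl fun k _ => integral_mul_fderiv_eq_neg_fderiv_mul_of_integrable
    (hint k) (hint' k) ?_ (fun x _ => hf.differentiable one_ne_zero x)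
    (fun x _ => (hcX k).differentiable one_ne_zero x)
  exact (hf.continuous.mul (hcX k).continuous).integrable_of_hasCompactSupport hfc.mul_right

end Divergence

section Diffeomorphism

variable {E : Type*} [NormedAddCommGroup E] [NormedSpace ℝ E]

theorem hasFDerivAt_diffeomorph (Φ : E ≃ₘ[ℝ] E) (x : E) : HasFDerivAt Φ (fderiv ℝ Φ x) x :=
  (Φ.contDiff.differentiable (by simp) x).hasFDerivAt

theorem fderiv_symm_comp_fderiv (Φ : E ≃ₘ[ℝ] E) (x : E) :
    (fderiv ℝ Φ.symm (Φ x)).comp (fderiv ℝ Φ x) = .id ℝ E := by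
  have h := (hasFDerivAt_diffeomorph Φ.symm (Φ x)).comp x (hasFDerivAt_diffeomorph Φ x)
  rw [show Φ.symm ∘ Φ = id from funext Φ.symm_apply_apply] at h
  exact h.unique (hasFDerivAt_id x)

theorem fderiv_comp_fderiv_symm (Φ : E ≃ₘ[ℝ] E) (x : E) :
    (fderiv ℝ Φ x).comp (fderiv ℝ Φ.symm (Φ x)) = .id ℝ E := by
  have h := fderiv_symm_comp_fderiv Φ.symm (Φ x)
  rwa [Φ.symm_apply_apply] at h

theorem ringInverse_fderiv (Φ : E ≃ₘ[ℝ] E) (x : E) :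
    Ring.inverse (fderiv ℝ Φ x) = fderiv ℝ Φ.symm (Φ x) :=
  Ring.inverse_unit
    ⟨fderiv ℝ Φ x, fderiv ℝ Φ.symm (Φ x), fderiv_comp_fderiv_symm Φ x, fderiv_symm_comp_fderiv Φ x⟩

theorem det_fderiv_ne_zero (Φ : E ≃ₘ[ℝ] E) (x : E) : (fderiv ℝ Φ x).det ≠ 0 := by
  have h := congrArg ContinuousLinearMap.det (fderiv_symm_comp_fderiv Φ x)
  rw [ContinuousLinearMap.det, ContinuousLinearMap.toLinearMap_comp, LinearMap.det_comp] at h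
  exact right_ne_zero_of_mul (h.trans_ne (by simp [ContinuousLinearMap.det]))

/-- The contravariant Piola transform of the vector field `X` under the diffeomorphism `Φ`: the
pullback of `X`, weighted with the Jacobian of `Φ`. -/
def piolaTransform (Φ : E ≃ₘ[ℝ] E) (X : E → E) (z : E) : E :=
  |(fderiv ℝ Φ z).det| • fderiv ℝ Φ.symm (Φ z) (X (Φ z))

theorem support_piolaTransform_subset (Φ : E ≃ₘ[ℝ] E) (X : E → E) :
    Function.support (piolaTransform Φ X) ⊆ Function.support (X ∘ Φ) := by
  intro z hz hX
  exact hz (by rw [piolaTransform, show X (Φ z) = 0 from hX, map_zero, smul_zero])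

variable [FiniteDimensional ℝ E]

theorem contDiff_abs_det_fderiv (Φ : E ≃ₘ[ℝ] E) :
    ContDiff ℝ ∞ fun x => |(fderiv ℝ Φ x).det| :=
  (contDiff_continuousLinearMap_det.comp (Φ.contDiff.fderiv_right (by simp))).abs
    (det_fderiv_ne_zero Φ)

theorem contDiff_piolaTransform (Φ : E ≃ₘ[ℝ] E) {X : E → E} (hX : ContDiff ℝ ∞ X) :
    ContDiff ℝ ∞ (piolaTransform Φ X) :=
  (contDiff_abs_det_fderiv Φ).smul <|
    ((Φ.symm.contDiff.fderiv_right (by simp)).comp Φ.contDiff).clm_apply (hX.comp Φ.contDiff)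

variable [MeasurableSpace E] [BorelSpace E] {μ : Measure E} [μ.IsAddHaarMeasure]
  {F : Type*} [NormedAddCommGroup F] [NormedSpace ℝ F]

theorem setIntegral_preimage_diffeomorph (Φ : E ≃ₘ[ℝ] E) {s : Set E} (hs : MeasurableSet s)
    (f : E → F) :
    ∫ x in Φ ⁻¹' s, |(fderiv ℝ Φ x).det| • f (Φ x) ∂μ = ∫ x in s, f x ∂μ := by
  rw [← integral_image_eq_integral_abs_det_fderiv_smul μ (Φ.continuous.measurable hs)
    (fun x _ => (hasFDerivAt_diffeomorph Φ x).hasFDerivWithinAt) Φ.injective.injOn,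
    show Φ '' (Φ ⁻¹' s) = s from image_preimage_eq s Φ.surjective]

theorem integral_comp_diffeomorph (Φ : E ≃ₘ[ℝ] E) (f : E → F) :
    ∫ x, |(fderiv ℝ Φ x).det| • f (Φ x) ∂μ = ∫ x, f x ∂μ := by
  simpa using setIntegral_preimage_diffeomorph (μ := μ) Φ MeasurableSet.univ f

theorem locallyIntegrableOn_comp_diffeomorph (Φ : E ≃ₘ[ℝ] E) {f : E → F} {s : Set E}
    (hs : IsOpen s) (hf : LocallyIntegrableOn f s μ) :
    LocallyIntegrableOn (f ∘ Φ) (Φ ⁻¹' s) μ := by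
  rw [locallyIntegrableOn_iff (hs.preimage Φ.continuous).isLocallyClosed]
  rw [locallyIntegrableOn_iff hs.isLocallyClosed] at hf
  intro K hK hKc
  have hΦK : IsCompact (Φ '' K) := hKc.image Φ.continuous
  rw [← Φ.symm_image_image K, integrableOn_image_iff_integrableOn_abs_det_fderiv_smul μ
    hΦK.measurableSet (fun x _ => (hasFDerivAt_diffeomorph Φ.symm x).hasFDerivWithinAt)
    Φ.symm.injective.injOn]
  simp only [Function.comp_apply, Diffeomorph.apply_symm_apply]
  exact (hf _ (image_subset_iff.2 hK) hΦK).continuousOn_smul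
    (contDiff_abs_det_fderiv Φ.symm).continuous.continuousOn hΦK

end Diffeomorphism

section Piola

variable {E : Type*} [NormedAddCommGroup E] [NormedSpace ℝ E] [FiniteDimensional ℝ E]

/-- The identity is proved by duality: against test functions, integrating by parts and changing
variables moves both divergences onto the test function, so no derivative of the Jacobian has to
be computed. -/
theorem divergence_piolaTransform (Φ : E ≃ₘ[ℝ] E) {X : E → E} (hX : ContDiff ℝ ∞ X) (z : E) :
    divergence (piolaTransform Φ X) z = |(fderiv ℝ Φ z).det| * divergence X (Φ z) := by
  borelize E
  let μ : Measure E := Measure.addHaar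
  have hX1 : ContDiff ℝ 1 X := hX.of_le (by simp)
  have hW1 : ContDiff ℝ 1 (piolaTransform Φ X) := (contDiff_piolaTransform Φ hX).of_le (by simp)
  have hcont := continuous_divergence hW1
  have hcont' : Continuous fun z => |(fderiv ℝ Φ z).det| * divergence X (Φ z) :=
    (contDiff_abs_det_fderiv Φ).continuous.mul
      ((continuous_divergence hX1).comp Φ.continuous)
  refine congrFun ((hcont.ae_eq_iff_eq μ hcont').1 ?_) z
  refine ae_eq_of_integral_contDiff_smul_eq hcont.locallyIntegrable hcont'.locallyIntegrable
    fun f hf hfc => ?_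
  have hf1 : ContDiff ℝ 1 f := hf.of_le (by simp)
  have hchain (x : E) : fderiv ℝ (f ∘ Φ.symm) x (X x) =
      fderiv ℝ f (Φ.symm x) (fderiv ℝ Φ.symm x (X x)) := by
    rw [fderiv_comp x (hf1.differentiable one_ne_zero _)
      (hasFDerivAt_diffeomorph Φ.symm x).differentiableAt, ContinuousLinearMap.comp_apply]
  calc ∫ z, f z • divergence (piolaTransform Φ X) z ∂μ
      = -∫ z, fderiv ℝ f z (piolaTransform Φ X z) ∂μ := integral_mul_divergence hf1 hfc hW1
    _ = -∫ z, |(fderiv ℝ Φ z).det| • fderiv ℝ (f ∘ Φ.symm) (Φ z) (X (Φ z)) ∂μ := by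
        simp only [hchain, piolaTransform, map_smul, Diffeomorph.symm_apply_apply]
    _ = -∫ x, fderiv ℝ (f ∘ Φ.symm) x (X x) ∂μ := by
        rw [integral_comp_diffeomorph Φ fun x => fderiv ℝ (f ∘ Φ.symm) x (X x)]
    _ = ∫ x, f (Φ.symm x) * divergence X x ∂μ :=
        (integral_mul_divergence (hf1.comp (Φ.symm.contDiff.of_le (by simp)))
          (hfc.comp_homeomorph Φ.symm.toHomeomorph) hX1).symm
    _ = ∫ z, f z • (|(fderiv ℝ Φ z).det| * divergence X (Φ z)) ∂μ := by
        rw [← integral_comp_diffeomorph Φ]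
        simp only [Diffeomorph.symm_apply_apply, smul_eq_mul, mul_left_comm]

end Piola

section WeakGradient

theorem integrableOn_mul_of_tsupport_subset {E : Type*} [NormedAddCommGroup E] [MeasurableSpace E]
    [OpensMeasurableSpace E] {μ : Measure E} {s : Set E} {f ψ : E → ℝ}
    (hf : LocallyIntegrableOn f s μ) (hψ : Continuous ψ) (hψc : HasCompactSupport ψ)
    (hψs : tsupport ψ ⊆ s) : IntegrableOn (fun x => f x * ψ x) s μ := by
  have hint : IntegrableOn (fun x => f x * ψ x) (tsupport ψ) μ :=
    (hf.integrableOn_compact_subset hψs hψc).mul_continuousOn hψ.continuousOn hψc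
  exact ((integrableOn_iff_integrable_of_support_subset
    ((Function.support_mul_subset_right f ψ).trans (subset_tsupport ψ))).1 hint).integrableOn

theorem locallyIntegrableOn_clm_comp {E F G : Type*} [NormedAddCommGroup E]
    [LocallyCompactSpace E] [SecondCountableTopology E] [MeasurableSpace E] [BorelSpace E]
    [NormedAddCommGroup F] [NormedSpace ℝ F] [NormedAddCommGroup G] [NormedSpace ℝ G]
    {μ : Measure E} {s : Set E} {g : E → F →L[ℝ] G} {L : E → F →L[ℝ] F} (hs : IsOpen s)
    (hg : LocallyIntegrableOn g s μ) (hL : Continuous L) :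
    LocallyIntegrableOn (fun x => (g x).comp (L x)) s μ := by
  rw [locallyIntegrableOn_iff hs.isLocallyClosed] at hg ⊢
  intro K hK hKc
  obtain ⟨C, hC⟩ := hKc.exists_bound_of_continuousOn hL.continuousOn
  refine ((hg K hK hKc).norm.mul_const C).mono' ((ContinuousLinearMap.compL ℝ F F G
    ).aestronglyMeasurable_comp₂ (hg K hK hKc).aestronglyMeasurable hL.aestronglyMeasurable) ?_
  filter_upwards [ae_restrict_mem hKc.measurableSet] with x hx
  exact (ContinuousLinearMap.opNorm_comp_le _ _).trans
    (mul_le_mul_of_nonneg_left (hC x hx) (norm_nonneg _))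

variable {n p : ℕ} {Ω : Set (EuclideanSpace ℝ (Fin n))}
  {u : EuclideanSpace ℝ (Fin n) → EuclideanSpace ℝ (Fin p)}
  {g : EuclideanSpace ℝ (Fin n) → EuclideanSpace ℝ (Fin n) →L[ℝ] EuclideanSpace ℝ (Fin p)}

theorem HasWeakGradient.integral_mul_divergence (hug : HasWeakGradient n p Ω u g)
    {X : EuclideanSpace ℝ (Fin n) → EuclideanSpace ℝ (Fin n)} (hX : ContDiff ℝ ∞ X)
    (hXc : HasCompactSupport X) (hXs : tsupport X ⊆ Ω) (j : Fin p) :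
    ∫ x in Ω, u x j * divergence X x = -∫ x in Ω, g x (X x) j := by
  obtain ⟨hu, hg, hparts⟩ := hug
  let b := EuclideanSpace.basisFun (Fin n) ℝ
  let c (k) : EuclideanSpace ℝ (Fin n) →L[ℝ] ℝ := EuclideanSpace.proj k
  have hcX (k) : ContDiff ℝ ∞ (c k ∘ X) := (c k).contDiff.comp hX
  have hcXc (k) : HasCompactSupport (c k ∘ X) := hXc.comp_left (map_zero _)
  have hcXs (k) : tsupport (c k ∘ X) ⊆ Ω :=
    (closure_mono (Function.support_comp_subset (map_zero (c k)) X)).trans hXs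
  have hdiv (x) : u x j * divergence X x =
      ∑ k, u x j * fderiv ℝ (c k ∘ X) x (EuclideanSpace.single k 1) := by
    rw [divergence, traceCLM_eq_sum_repr b.toBasis, Finset.mul_sum]
    simp_rw [fderiv_comp x (c _).differentiableAt (hX.differentiable (by simp) x),
      ContinuousLinearMap.fderiv]
    simp [b, c]
  have hexp (x) : g x (X x) j = ∑ k, (c k ∘ X) x * g x (EuclideanSpace.single k 1) j := by
    conv_lhs => rw [← b.sum_repr (X x), map_sum]
    simp [b, c]
  simp_rw [hdiv, hexp]
  rw [integral_finsetSum, integral_finsetSum, ← Finset.sum_neg_distrib]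
  · exact Finset.sum_congr rfl fun k _ => hparts _ (hcX k) (hcXc k) (hcXs k) k j
  · intro k _
    simp_rw [mul_comm ((c k ∘ X) _)]
    let ev := ContinuousLinearMap.apply ℝ (EuclideanSpace ℝ (Fin p))
      (EuclideanSpace.single k (1 : ℝ))
    exact integrableOn_mul_of_tsupport_subset
      (((EuclideanSpace.proj j).comp ev).locallyIntegrableOn_comp hg)
      (hcX k).continuous (hcXc k) (hcXs k)
  · intro k _
    exact integrableOn_mul_of_tsupport_subset
      ((EuclideanSpace.proj (𝕜 := ℝ) j).locallyIntegrableOn_comp hu)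
      (((hcX k).continuous_fderiv (by simp)).clm_apply continuous_const)
      ((hcXc k).fderiv_apply ℝ _) ((tsupport_fderiv_apply_subset ℝ _).trans (hcXs k))

theorem HasWeakGradient.comp_diffeomorph (hug : HasWeakGradient n p Ω u g) (hΩ : IsOpen Ω)
    (Ψ : EuclideanSpace ℝ (Fin n) ≃ₘ[ℝ] EuclideanSpace ℝ (Fin n)) :
    HasWeakGradient n p (Ψ ⁻¹' Ω) (u ∘ Ψ) (fun x => (g (Ψ x)).comp (fderiv ℝ Ψ x)) := by
  have hΨΩ : Ψ.symm ⁻¹' (Ψ ⁻¹' Ω) = Ω := by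
    rw [← preimage_comp, show Ψ ∘ Ψ.symm = id from funext Ψ.apply_symm_apply, preimage_id]
  have hmeas : MeasurableSet (Ψ ⁻¹' Ω) := Ψ.continuous.measurable hΩ.measurableSet
  refine ⟨locallyIntegrableOn_comp_diffeomorph Ψ hΩ hug.1,
    locallyIntegrableOn_clm_comp (hΩ.preimage Ψ.continuous)
      (locallyIntegrableOn_comp_diffeomorph Ψ hΩ hug.2.1)
      (Ψ.contDiff.continuous_fderiv (by simp)), fun φ hφ hφc hφs i j => ?_⟩
  let X (x : EuclideanSpace ℝ (Fin n)) := φ x • EuclideanSpace.single i (1 : ℝ)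
  have hX : ContDiff ℝ ∞ X := hφ.smul contDiff_const
  have hsupp : tsupport (piolaTransform Ψ.symm X) ⊆ Ψ.symm ⁻¹' tsupport φ :=
    closure_minimal (fun z hz => subset_tsupport φ (left_ne_zero_of_smul
      (support_piolaTransform_subset Ψ.symm X hz)))
      ((isClosed_tsupport φ).preimage Ψ.symm.continuous)
  have hcpt : HasCompactSupport (piolaTransform Ψ.symm X) :=
    (Ψ.symm.toHomeomorph.isClosedEmbedding.isCompact_preimage hφc).of_isClosed_subset
      (isClosed_tsupport _) hsupp
  have hparts := hug.integral_mul_divergence (contDiff_piolaTransform Ψ.symm hX) hcpt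
    (hsupp.trans ((preimage_mono hφs).trans hΨΩ.subset)) j
  have hleft (z) : |(fderiv ℝ Ψ.symm z).det| • ((u ∘ Ψ) (Ψ.symm z) j *
      fderiv ℝ φ (Ψ.symm z) (EuclideanSpace.single i 1)) =
      u z j * divergence (piolaTransform Ψ.symm X) z := by
    rw [divergence_piolaTransform Ψ.symm hX,
      divergence_smul_const (hφ.differentiable (by simp) _), Function.comp_apply,
      Ψ.apply_symm_apply, smul_eq_mul, mul_left_comm]
  have hright (z) : |(fderiv ℝ Ψ.symm z).det| • (φ (Ψ.symm z) *
      (g (Ψ (Ψ.symm z))).comp (fderiv ℝ Ψ (Ψ.symm z)) (EuclideanSpace.single i 1) j) =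
      g z (piolaTransform Ψ.symm X z) j := by
    simp only [piolaTransform, X, map_smul, PiLp.smul_apply, Ψ.apply_symm_apply, smul_eq_mul]
    rfl
  rw [← setIntegral_preimage_diffeomorph Ψ.symm hmeas, hΨΩ,
    ← setIntegral_preimage_diffeomorph Ψ.symm hmeas, hΨΩ]
  simp_rw [hleft, hright]
  exact hparts

end WeakGradient

section EnergyForm

open ContinuousLinearMap (adjoint)
open InnerProductSpace (rankOne)

variable {E F : Type*} [NormedAddCommGroup E] [InnerProductSpace ℝ E] [FiniteDimensional ℝ E]
  [NormedAddCommGroup F] [InnerProductSpace ℝ F] [FiniteDimensional ℝ F]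

/-- The linear functional `S ↦ tr (A S A†)`; the Hilbert–Schmidt norm of `A` is recovered as
`|A|² = energyForm A 1`. -/
def energyForm (A : E →L[ℝ] F) : (E →L[ℝ] E) →L[ℝ] ℝ :=
  traceCLM F ∘L (ContinuousLinearMap.compL ℝ F E F).flip (adjoint A) ∘L
    ContinuousLinearMap.compL ℝ E E F A

theorem energyForm_apply (A : E →L[ℝ] F) (S : E →L[ℝ] E) :
    energyForm A S = traceCLM F ((A ∘L S) ∘L adjoint A) := rfl

theorem energyForm_eq_sum_inner {ι : Type*} [Fintype ι] (b : OrthonormalBasis ι ℝ F)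
    (A : E →L[ℝ] F) (S : E →L[ℝ] E) :
    energyForm A S = ∑ j, ⟪adjoint A (b j), S (adjoint A (b j))⟫ := by
  rw [energyForm_apply, traceCLM_apply, LinearMap.trace_eq_sum_inner _ b]
  exact Finset.sum_congr rfl fun j _ => (A.adjoint_inner_left _ _).symm

theorem energyForm_one_nonneg (A : E →L[ℝ] F) : 0 ≤ energyForm A 1 := by
  rw [energyForm_eq_sum_inner (stdOrthonormalBasis ℝ F)]
  exact Finset.sum_nonneg fun j _ => real_inner_self_nonneg

theorem abs_energyForm_le (A : E →L[ℝ] F) (S : E →L[ℝ] E) :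
    |energyForm A S| ≤ ‖S‖ * energyForm A 1 := by
  simp_rw [energyForm_eq_sum_inner (stdOrthonormalBasis ℝ F), Finset.mul_sum]
  refine (Finset.abs_sum_le_sum_abs _ _).trans (Finset.sum_le_sum fun j _ => ?_)
  calc |⟪adjoint A _, S (adjoint A _)⟫| ≤ ‖adjoint A _‖ * ‖S (adjoint A _)‖ :=
        abs_real_inner_le_norm _ _
    _ ≤ ‖adjoint A _‖ * (‖S‖ * ‖adjoint A _‖) := by gcongr; exact S.le_opNorm _
    _ = ‖S‖ * ⟪adjoint A _, adjoint A _⟫ := by rw [real_inner_self_eq_norm_sq]; ring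

theorem energyForm_star (A : E →L[ℝ] F) (S : E →L[ℝ] E) :
    energyForm A (star S) = energyForm A S := by
  simp_rw [energyForm_eq_sum_inner (stdOrthonormalBasis ℝ F),
    ContinuousLinearMap.star_eq_adjoint]
  exact Finset.sum_congr rfl fun j _ => (S.adjoint_inner_right _ _).trans (real_inner_comm _ _)

theorem energyForm_comp_one (A : E →L[ℝ] F) (B : E →L[ℝ] E) :
    energyForm (A ∘L B) 1 = energyForm A (B * star B) := by
  rw [energyForm_apply, energyForm_apply, ContinuousLinearMap.adjoint_comp]
  rfl

theorem energyForm_rankOne (A : E →L[ℝ] F) (v : E) : energyForm A (rankOne ℝ v v) = ‖A v‖ ^ 2 := by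
  let b := stdOrthonormalBasis ℝ F
  rw [energyForm_eq_sum_inner b, ← b.sum_sq_norm_inner_right]
  refine Finset.sum_congr rfl fun j _ => ?_
  rw [InnerProductSpace.rankOne_apply, inner_smul_right, real_inner_comm _ v,
    A.adjoint_inner_left, Real.norm_eq_abs, sq_abs, sq]

theorem energyDensity_eq_energyForm (n p : ℕ)
    (g : EuclideanSpace ℝ (Fin n) → EuclideanSpace ℝ (Fin n) →L[ℝ] EuclideanSpace ℝ (Fin p))
    (x : EuclideanSpace ℝ (Fin n)) : energyDensity n p g x = energyForm (g x) 1 := by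
  rw [energyForm_eq_sum_inner (EuclideanSpace.basisFun (Fin p) ℝ), energyDensity, Finset.sum_comm]
  refine Finset.sum_congr rfl fun j _ => ?_
  rw [one_apply_eq_self, real_inner_self_eq_norm_sq,
    ← (EuclideanSpace.basisFun (Fin n) ℝ).sum_sq_norm_inner_right]
  exact Finset.sum_congr rfl fun i _ => by
    simp [ContinuousLinearMap.adjoint_inner_right, EuclideanSpace.inner_single_right]

theorem continuous_energyForm :
    Continuous fun q : (E →L[ℝ] F) × (E →L[ℝ] E) => energyForm q.1 q.2 := by
  simp only [energyForm_apply]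
  fun_prop

variable {α : Type*} [MeasurableSpace α] {μ : Measure α} {g : α → E →L[ℝ] F} {S : α → E →L[ℝ] E}

theorem aestronglyMeasurable_energyForm (hg : AEStronglyMeasurable g μ)
    (hS : AEStronglyMeasurable S μ) :
    AEStronglyMeasurable (fun x => energyForm (g x) (S x)) μ :=
  (continuous_energyForm.comp_aestronglyMeasurable (hg.prodMk hS) :)

end EnergyForm

section EnergyVariation

variable {E : Type*} [NormedAddCommGroup E] [InnerProductSpace ℝ E] [FiniteDimensional ℝ E]

/-- The coefficient `|det B| B⁻¹ B⁻ᵀ` through which the energy of `u ∘ Ψ⁻¹` depends on `B = DΨ`.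
For singular `B` it is zero. -/
def energyCoefficient (B : E →L[ℝ] E) : E →L[ℝ] E :=
  |B.det| • (Ring.inverse B * star (Ring.inverse B))

/-- The derivative `T ↦ (tr T) 1 - T - Tᵀ` of the energy coefficient at the identity. -/
def energyVariation : (E →L[ℝ] E) →L[ℝ] (E →L[ℝ] E) :=
  (traceCLM E).smulRight (1 : E →L[ℝ] E) -
    (ContinuousLinearMap.id ℝ (E →L[ℝ] E) + (starL' ℝ).toContinuousLinearMap)

theorem energyVariation_apply (T : E →L[ℝ] E) :
    energyVariation T = traceCLM E T • 1 - (T + star T) := rfl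

theorem energyForm_energyVariation {F : Type*} [NormedAddCommGroup F] [InnerProductSpace ℝ F]
    [FiniteDimensional ℝ F] (A : E →L[ℝ] F) (T : E →L[ℝ] E) :
    energyForm A (energyVariation T) = traceCLM E T * energyForm A 1 - 2 * energyForm A T := by
  rw [energyVariation_apply, map_sub, map_smul, map_add, energyForm_star, smul_eq_mul, two_mul]

theorem energyCoefficient_one : energyCoefficient (1 : E →L[ℝ] E) = 1 := by
  rw [energyCoefficient, Ring.inverse_one, star_one, mul_one,
    show (1 : E →L[ℝ] E).det = 1 from LinearMap.det_id, abs_one, one_smul]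

theorem contDiffAt_energyCoefficient_one :
    ContDiffAt ℝ ∞ (energyCoefficient : (E →L[ℝ] E) → _) 1 := by
  have hinv : ContDiffAt ℝ ∞ (Ring.inverse : (E →L[ℝ] E) → _) 1 := contDiffAt_ringInverse ℝ 1
  have hdet : (1 : E →L[ℝ] E).det ≠ 0 := by simp [ContinuousLinearMap.det]
  exact (contDiff_continuousLinearMap_det.contDiffAt.abs hdet).smul
    (hinv.mul ((starL' ℝ : (E →L[ℝ] E) ≃L[ℝ] (E →L[ℝ] E)).contDiff.contDiffAt.comp _ hinv))

theorem hasFDerivAt_energyCoefficient_one :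
    HasFDerivAt (energyCoefficient : (E →L[ℝ] E) → _) energyVariation 1 := by
  have hdet : (1 : E →L[ℝ] E).det = 1 := LinearMap.det_id
  have hinv : HasFDerivAt (Ring.inverse : (E →L[ℝ] E) → _) (-ContinuousLinearMap.id ℝ _) 1 :=
    (hasFDerivAt_ringInverse (1 : (E →L[ℝ] E)ˣ)).congr_fderiv (by ext; simp)
  have hstar := (starL' ℝ : (E →L[ℝ] E) ≃L[ℝ] (E →L[ℝ] E)).hasFDerivAt.comp 1 hinv
  have habs : HasFDerivAt (fun B : E →L[ℝ] E => |B.det|) (traceCLM E) 1 :=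
    ((hasDerivAt_abs_pos (hdet ▸ one_pos)).comp_hasFDerivAt
      (1 : E →L[ℝ] E) hasFDerivAt_det_id).congr_fderiv (one_smul ℝ _)
  refine (habs.smul (hinv.mul' hstar)).congr_fderiv (ContinuousLinearMap.ext fun T => ?_)
  change |(1 : E →L[ℝ] E).det| • (Ring.inverse 1 * star (-T) + -T * star (Ring.inverse 1)) +
    traceCLM E T • (Ring.inverse 1 * star (Ring.inverse 1)) = traceCLM E T • 1 - (T + star T)
  rw [hdet, abs_one, one_smul, Ring.inverse_one, star_one, one_mul, mul_one, mul_one, star_neg]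
  abel

theorem eventually_forall_add_smul_mem {V α : Type*} [NormedAddCommGroup V] [NormedSpace ℝ V]
    {s : Set V} {a : V} (hs : s ∈ 𝓝 a) {T : α → V} {M : ℝ} (hM : ∀ x, ‖T x‖ ≤ M) :
    ∀ᶠ t : ℝ in 𝓝 0, ∀ x, a + t • T x ∈ s := by
  obtain ⟨ε, hε, hεs⟩ := Metric.mem_nhds_iff.1 hs
  have hlim : Tendsto (fun t : ℝ => ‖t‖ * M) (𝓝 0) (𝓝 0) := by
    simpa using (tendsto_norm_zero (E := ℝ)).mul_const M
  filter_upwards [hlim.eventually_lt_const hε] with t ht x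
  refine hεs ?_
  rw [mem_ball_iff_norm, add_sub_cancel_left, norm_smul]
  exact (mul_le_mul_of_nonneg_left (hM x) (norm_nonneg t)).trans_lt ht

variable {F : Type*} [NormedAddCommGroup F] [InnerProductSpace ℝ F] [FiniteDimensional ℝ F]
  {α : Type*} [TopologicalSpace α] [MeasurableSpace α] [OpensMeasurableSpace α] {μ : Measure α}

theorem hasDerivAt_integral_energyForm {g : α → E →L[ℝ] F} (hg : AEStronglyMeasurable g μ)
    (he : Integrable (fun x => energyForm (g x) 1) μ) {T : α → E →L[ℝ] E} (hT : Continuous T)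
    {M : ℝ} (hM : ∀ x, ‖T x‖ ≤ M) :
    HasDerivAt (fun t : ℝ => ∫ x, energyForm (g x) (energyCoefficient (1 + t • T x)) ∂μ)
      (∫ x, energyForm (g x) (energyVariation (T x)) ∂μ) 0 := by
  obtain ⟨K, V, hV, hK⟩ :=
    ((contDiffAt_energyCoefficient_one (E := E)).of_le (by simp)).exists_lipschitzOnWith
  have hVT := eventually_forall_add_smul_mem hV hM
  have hcoef_cont {t : ℝ} (ht : ∀ x, 1 + t • T x ∈ V) :
      Continuous fun x => energyCoefficient (1 + t • T x) :=
    hK.continuousOn.comp_continuous (continuous_const.add (hT.const_smul t)) ht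
  refine (hasDerivAt_integral_of_dominated_loc_of_lip (bound := fun x => K * M * energyForm (g x) 1)
    hVT ?_ ?_ ?_ (.of_forall fun x => ?_) (he.const_mul _) (.of_forall fun x => ?_)).2
  · filter_upwards [hVT] with t ht
    exact aestronglyMeasurable_energyForm hg (hcoef_cont ht).aestronglyMeasurable
  · simpa [energyCoefficient_one] using he
  · exact aestronglyMeasurable_energyForm hg
      (energyVariation.continuous.comp hT).aestronglyMeasurable
  · refine LipschitzOnWith.of_dist_le_mul fun s hs t ht => ?_
    have he0 := energyForm_one_nonneg (g x)
    have hM0 := (norm_nonneg _).trans (hM x)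
    rw [Real.coe_nnabs, abs_of_nonneg (by positivity), Real.dist_eq, ← map_sub]
    calc |energyForm (g x) (energyCoefficient (1 + s • T x) - energyCoefficient (1 + t • T x))|
        ≤ ‖energyCoefficient (1 + s • T x) - energyCoefficient (1 + t • T x)‖ *
            energyForm (g x) 1 := abs_energyForm_le _ _
      _ ≤ (K * ‖(1 + s • T x) - (1 + t • T x)‖) * energyForm (g x) 1 := by
          gcongr
          exact hK.norm_sub_le (hs x) (ht x)
      _ = K * (dist s t * ‖T x‖) * energyForm (g x) 1 := by
          rw [add_sub_add_left_eq_sub, ← sub_smul, norm_smul, dist_eq_norm]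
      _ ≤ K * (dist s t * M) * energyForm (g x) 1 := by gcongr; exact hM x
      _ = K * M * energyForm (g x) 1 * dist s t := by ring
  · have hline : HasDerivAt (fun t : ℝ => 1 + t • T x) (T x) 0 := by
      simpa using ((hasDerivAt_id (0 : ℝ)).smul_const (T x)).const_add 1
    have hcoef := hasFDerivAt_energyCoefficient_one.comp_hasDerivAt_of_eq 0 hline (by simp)
    exact (energyForm (g x)).hasFDerivAt.comp_hasDerivAt 0 hcoef

end EnergyVariation

section PerturbationOfIdentity

variable {E : Type*} [NormedAddCommGroup E] [NormedSpace ℝ E] {X : E → E}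

theorem exists_diffeomorph_add_of_lipschitzWith_lt_one [CompleteSpace E] (hX : ContDiff ℝ ∞ X)
    {K : NNReal} (hK : K < 1) (hL : LipschitzWith K X) : ∃ Ψ : E ≃ₘ[ℝ] E, ∀ x, Ψ x = x + X x := by
  have happrox : ApproximatesLinearOn (fun x => x + X x)
      (ContinuousLinearEquiv.refl ℝ E : E →L[ℝ] E) univ K := by
    rw [ApproximatesLinearOn.approximatesLinearOn_iff_lipschitzOnWith, lipschitzOnWith_univ]
    convert hL using 1
    ext x
    simp
  have hsmall : Subsingleton E ∨
      K < ‖((ContinuousLinearEquiv.refl ℝ E).symm : E →L[ℝ] E)‖₊⁻¹ := by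
    refine (subsingleton_or_nontrivial E).imp_right fun (_ : Nontrivial E) => ?_
    rwa [ContinuousLinearEquiv.refl_symm, ContinuousLinearEquiv.coe_refl,
      ContinuousLinearMap.nnnorm_id, inv_one]
  let Ψ := happrox.toHomeomorph _ hsmall
  have hΨ : ContDiff ℝ ∞ Ψ := contDiff_id.add hX
  have hnorm (x : E) : ‖-fderiv ℝ X x‖ < 1 :=
    (norm_neg _).trans_lt ((norm_fderiv_le_of_lipschitz ℝ hL).trans_lt hK)
  have hderiv (x : E) : HasFDerivAt Ψ
      (ContinuousLinearEquiv.ofUnit (Units.oneSub _ (hnorm x)) : E →L[ℝ] E) x := by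
    refine ((hasFDerivAt_id x).add (hX.differentiable (by simp) x).hasFDerivAt).congr_fderiv ?_
    exact (sub_neg_eq_add _ _).symm
  exact ⟨⟨Ψ.toEquiv, hΨ.contMDiff, (Ψ.contDiff_symm hderiv hΨ).contMDiff⟩, fun x => rfl⟩

theorem eventually_exists_diffeomorph_add_smul [CompleteSpace E] (hX : ContDiff ℝ ∞ X)
    (hXc : HasCompactSupport X) :
    ∀ᶠ t : ℝ in 𝓝 0, ∃ Ψ : E ≃ₘ[ℝ] E, ∀ x, Ψ x = x + t • X x := by
  obtain ⟨K, hK⟩ := hX.lipschitzWith_of_hasCompactSupport hXc (by simp)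
  have hlim : Tendsto (fun t : ℝ => ‖t‖₊ * K) (𝓝 0) (𝓝 0) := by
    simpa using (continuous_nnnorm.tendsto (0 : ℝ)).mul_const K
  filter_upwards [hlim.eventually_lt_const one_pos] with t ht
  exact exists_diffeomorph_add_of_lipschitzWith_lt_one (hX.const_smul t) ht
    ((lipschitzWith_smul t).comp hK)

end PerturbationOfIdentity

section DomainVariation

theorem preimage_eq_self_of_eqOn_compl {α : Type*} {f : α → α} (hf : Function.Injective f)
    {s : Set α} (hfs : EqOn f id sᶜ) : f ⁻¹' s = s := by
  ext x
  by_cases hx : x ∈ s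
  · refine iff_of_true (by_contra fun hfx => hfx ?_) hx
    rwa [mem_preimage, hf (hfs hfx)]
  · simp [mem_preimage, hfs hx]

variable {E F : Type*} [NormedAddCommGroup E] [InnerProductSpace ℝ E] [FiniteDimensional ℝ E]
  [NormedAddCommGroup F] [InnerProductSpace ℝ F] [FiniteDimensional ℝ F]

variable [MeasurableSpace E] [BorelSpace E] {μ : Measure E}

theorem setIntegral_energyForm_comp_symm [μ.IsAddHaarMeasure] (Ψ : E ≃ₘ[ℝ] E) {s : Set E}
    (hs : MeasurableSet s) (g : E → E →L[ℝ] F) :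
    ∫ x in Ψ.symm ⁻¹' s, energyForm (g (Ψ.symm x) ∘L fderiv ℝ Ψ.symm x) 1 ∂μ =
      ∫ x in s, energyForm (g x) (energyCoefficient (fderiv ℝ Ψ x)) ∂μ := by
  have hΨs : Ψ ⁻¹' (Ψ.symm ⁻¹' s) = s := by
    rw [← preimage_comp, show Ψ.symm ∘ Ψ = id from funext Ψ.symm_apply_apply, preimage_id]
  rw [← setIntegral_preimage_diffeomorph Ψ (Ψ.symm.continuous.measurable hs), hΨs]
  refine setIntegral_congr_fun hs fun x _ => ?_
  simp only [Ψ.symm_apply_apply, energyForm_comp_one, energyCoefficient, ringInverse_fderiv,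
    map_smul]

theorem locallyIntegrableOn_energyForm {s : Set E} {g : E → E →L[ℝ] F} {S : E → E →L[ℝ] E}
    (hs : IsOpen s) (hg : LocallyIntegrableOn g s μ)
    (he : LocallyIntegrableOn (fun x => energyForm (g x) 1) s μ) (hS : Continuous S) :
    LocallyIntegrableOn (fun x => energyForm (g x) (S x)) s μ := by
  rw [locallyIntegrableOn_iff hs.isLocallyClosed] at hg he ⊢
  intro K hK hKc
  obtain ⟨C, hC⟩ := hKc.exists_bound_of_continuousOn hS.continuousOn
  refine ((he K hK hKc).const_mul C).mono' (aestronglyMeasurable_energyForm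
    (hg K hK hKc).aestronglyMeasurable hS.aestronglyMeasurable) ?_
  filter_upwards [ae_restrict_mem hKc.measurableSet] with x hx
  exact (abs_energyForm_le (g x) (S x)).trans
    (mul_le_mul_of_nonneg_right (hC x hx) (energyForm_one_nonneg (g x)))

end DomainVariation

section Stationarity

variable {E F : Type*} [NormedAddCommGroup E] [InnerProductSpace ℝ E] [FiniteDimensional ℝ E]
  [NormedAddCommGroup F] [InnerProductSpace ℝ F] [FiniteDimensional ℝ F] [MeasurableSpace E]

/-- The gradient field `g` has finite energy on `U`, and the energy is stationary under domain
variations of `U`, that is, precomposition with the flow of a smooth vector field compactly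
supported in `U`. -/
structure IsStationaryOn (μ : Measure E) (g : E → E →L[ℝ] F) (U : Set E) : Prop where
  aestronglyMeasurable : AEStronglyMeasurable g (μ.restrict U)
  integrableOn_energyForm_one : IntegrableOn (fun x => energyForm (g x) 1) U μ
  integral_energyVariation_eq_zero : ∀ X : E → E, ContDiff ℝ ∞ X → HasCompactSupport X →
    tsupport X ⊆ U → ∫ x in U, energyForm (g x) (energyVariation (fderiv ℝ X x)) ∂μ = 0

variable [BorelSpace E]

theorem quasiMeasurePreserving_diffeomorph (μ : Measure E) [μ.IsAddHaarMeasure] (Φ : E ≃ₘ[ℝ] E) :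
    Measure.QuasiMeasurePreserving Φ μ μ := by
  refine ⟨Φ.continuous.measurable, .mk fun s hs hμs => ?_⟩
  rw [Measure.map_apply Φ.continuous.measurable hs, ← Φ.symm_image_eq_preimage]
  exact addHaar_image_eq_zero_of_differentiableOn_of_addHaar_eq_zero μ
    (Φ.symm.contDiff.differentiable (by simp)).differentiableOn hμs

variable {n p : ℕ} {Ω : Set (EuclideanSpace ℝ (Fin n))}
  {u : EuclideanSpace ℝ (Fin n) → EuclideanSpace ℝ (Fin p)}
  {g : EuclideanSpace ℝ (Fin n) → EuclideanSpace ℝ (Fin n) →L[ℝ] EuclideanSpace ℝ (Fin p)}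
  {y : EuclideanSpace ℝ (Fin n)} {ρ₀ : ℝ}

theorem IsEnergyMinimizingToSphere.locallyIntegrableOn_energyForm_one
    (hu : IsEnergyMinimizingToSphere n p Ω u g) :
    LocallyIntegrableOn (fun x => energyForm (g x) 1) Ω :=
  funext (energyDensity_eq_energyForm n p g) ▸ hu.2.1

theorem IsEnergyMinimizingToSphere.integral_le_of_diffeomorph
    (hu : IsEnergyMinimizingToSphere n p Ω u g) (hΩ : IsOpen Ω) (hρ₀ : 0 < ρ₀)
    (hB : closedBall y ρ₀ ⊆ Ω)
    (Ψ : EuclideanSpace ℝ (Fin n) ≃ₘ[ℝ] EuclideanSpace ℝ (Fin n)) {σ : ℝ} (hσ : σ < ρ₀)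
    (hΨ : EqOn Ψ id (ball y σ)ᶜ) :
    ∫ x in ball y ρ₀, energyForm (g x) 1 ≤
      ∫ x in ball y ρ₀, energyForm (g x) (energyCoefficient (fderiv ℝ Ψ x)) := by
  have hsymm : EqOn Ψ.symm id (ball y σ)ᶜ := fun x hx => Ψ.symm_apply_eq.2 (hΨ hx).symm
  have hpre {s : Set (EuclideanSpace ℝ (Fin n))} (hs : ball y σ ⊆ s) : Ψ.symm ⁻¹' s = s :=
    preimage_eq_self_of_eqOn_compl Ψ.symm.injective (hsymm.mono (compl_subset_compl.2 hs))
  have hσρ₀ : ball y σ ⊆ ball y ρ₀ := ball_subset_ball hσ.le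
  have hpreΩ := hpre (hσρ₀.trans (ball_subset_closedBall.trans hB))
  have henergy (x) : energyForm (g (Ψ.symm x) ∘L fderiv ℝ Ψ.symm x) 1 =
      ((fun x => energyForm (g x)
        ((fderiv ℝ Ψ.symm (Ψ x)) * star (fderiv ℝ Ψ.symm (Ψ x)))) ∘ Ψ.symm) x := by
    simp only [Function.comp_apply, Ψ.apply_symm_apply, energyForm_comp_one]
  have hweak := hu.1.comp_diffeomorph hΩ Ψ.symm
  rw [hpreΩ] at hweak
  have hcompare := hu.2.2.2 y ρ₀ hρ₀ hB _ _ hweak ?_ ?_ ⟨σ, hσ, ?_⟩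
  · simp_rw [energyDensity_eq_energyForm] at hcompare
    rwa [← setIntegral_energyForm_comp_symm Ψ measurableSet_ball, hpre hσρ₀]
  · rw [funext (energyDensity_eq_energyForm n p _)]
    simp_rw [henergy]
    have hcont := (Ψ.symm.contDiff.continuous_fderiv (by simp)).comp Ψ.continuous
    rw [← hpreΩ]
    exact locallyIntegrableOn_comp_diffeomorph Ψ.symm hΩ (locallyIntegrableOn_energyForm hΩ
      hu.1.2.1 hu.locallyIntegrableOn_energyForm_one (hcont.mul hcont.star))
  · have hsphere := hu.2.2.1
    rw [ae_restrict_iff' hΩ.measurableSet] at hsphere ⊢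
    filter_upwards [(quasiMeasurePreserving_diffeomorph volume Ψ.symm).ae hsphere] with x hx hxΩ
    exact hx (hpreΩ.symm.subset hxΩ)
  · filter_upwards [ae_restrict_mem (hΩ.measurableSet.diff measurableSet_ball)] with x hx
    rw [Function.comp_apply, hsymm hx.2, id]

theorem IsEnergyMinimizingToSphere.isStationaryOn (hu : IsEnergyMinimizingToSphere n p Ω u g)
    (hΩ : IsOpen Ω) (hρ₀ : 0 < ρ₀) (hB : closedBall y ρ₀ ⊆ Ω) :
    IsStationaryOn volume g (ball y ρ₀) := by
  have hmeas : AEStronglyMeasurable g (volume.restrict (ball y ρ₀)) :=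
    ((hu.1.2.1.integrableOn_compact_subset hB
      (isCompact_closedBall y ρ₀)).mono_set ball_subset_closedBall).aestronglyMeasurable
  have henergy : IntegrableOn (fun x => energyForm (g x) 1) (ball y ρ₀) :=
    (hu.locallyIntegrableOn_energyForm_one.integrableOn_compact_subset hB
      (isCompact_closedBall y ρ₀)).mono_set ball_subset_closedBall
  refine ⟨hmeas, henergy, fun X hX hXc hXs => ?_⟩
  have hX' : Continuous (fderiv ℝ X) := hX.continuous_fderiv (by simp)
  obtain ⟨M, hM⟩ := hX'.bounded_above_of_compact_support (hXc.fderiv ℝ)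
  obtain ⟨σ, hσ, hXσ⟩ := exists_lt_subset_ball (isClosed_tsupport X) hXs
  refine IsLocalMin.hasDerivAt_eq_zero ?_ (hasDerivAt_integral_energyForm hmeas henergy hX' hM)
  filter_upwards [eventually_exists_diffeomorph_add_smul hX hXc] with t ⟨Ψ, hΨ⟩
  have hfix : EqOn Ψ id (ball y σ)ᶜ := fun x hx => by
    rw [hΨ, image_eq_zero_of_notMem_tsupport (notMem_subset hXσ hx), smul_zero, add_zero, id]
  have hfderiv (x) : fderiv ℝ Ψ x = 1 + t • fderiv ℝ X x := by
    have hXx := (hX.differentiable (by simp) x).hasFDerivAt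
    rw [show ⇑Ψ = fun x => x + t • X x from funext hΨ]
    exact ((hasFDerivAt_id x).add (hXx.const_smul t)).fderiv
  simpa [energyCoefficient_one, hfderiv] using hu.integral_le_of_diffeomorph hΩ hρ₀ hB Ψ hσ hfix

end Stationarity

section RadialField

open InnerProductSpace (rankOne)

variable {E : Type*} [NormedAddCommGroup E] [InnerProductSpace ℝ E]

theorem hasFDerivAt_comp_norm_sub_sq {f : ℝ → ℝ} {f' : ℝ} {x y : E}
    (hf : HasDerivAt f f' (‖x - y‖ ^ 2)) :
    HasFDerivAt (fun x => f (‖x - y‖ ^ 2)) ((2 * f') • innerSL ℝ (x - y)) x := by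
  refine (hf.comp_hasFDerivAt x ((hasFDerivAt_id x).sub_const y).norm_sq).congr_fderiv ?_
  ext z
  simp
  ring

theorem hasFDerivAt_radialField {f : ℝ → ℝ} {f' : ℝ} {x y : E}
    (hf : HasDerivAt f f' (‖x - y‖ ^ 2)) :
    HasFDerivAt (fun x => f (‖x - y‖ ^ 2) • (x - y))
      (f (‖x - y‖ ^ 2) • (1 : E →L[ℝ] E) + (2 * f') • rankOne ℝ (x - y) (x - y)) x := by
  refine ((hasFDerivAt_comp_norm_sub_sq hf).smul
    ((hasFDerivAt_id x).sub_const y)).congr_fderiv ?_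
  ext z
  simp only [add_apply, smul_apply,
    ContinuousLinearMap.smulRight_apply, InnerProductSpace.rankOne_apply, innerSL_apply_apply,
    smul_smul, smul_eq_mul]
  rfl

variable [FiniteDimensional ℝ E] {F : Type*} [NormedAddCommGroup F] [InnerProductSpace ℝ F]
  [FiniteDimensional ℝ F]

theorem energyForm_energyVariation_smul_one_add_smul_rankOne (A : E →L[ℝ] F) (a b : ℝ) (v : E) :
    energyForm A (energyVariation (a • 1 + b • rankOne ℝ v v)) =
      ((Module.finrank ℝ E - 2) * a + b * ‖v‖ ^ 2) * energyForm A 1 - 2 * b * ‖A v‖ ^ 2 := by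
  have hid : traceCLM E 1 = Module.finrank ℝ E := traceCLM_id
  have hrank : traceCLM E (rankOne ℝ v v) = ‖v‖ ^ 2 :=
    (traceCLM_smulRight (innerSL ℝ v) v).trans (real_inner_self_eq_norm_sq v)
  rw [energyForm_energyVariation, map_add, map_add, map_smul, map_smul, map_smul, map_smul,
    hid, hrank, energyForm_rankOne]
  simp only [smul_eq_mul]
  ring

variable [MeasurableSpace E] {μ : Measure E} {g : E → E →L[ℝ] F} {y : E} {R b : ℝ}

theorem IsStationaryOn.integral_radialField_eq_zero (hg : IsStationaryOn μ g (ball y R))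
    (hR : 0 < R) {η η' : ℝ → ℝ} (hη : ContDiff ℝ ∞ η) (hη' : ∀ s, HasDerivAt η (η' s) s)
    (hb : b < R ^ 2) (hη0 : ∀ s, b ≤ s → η s = 0) :
    ∫ x in ball y R, (((Module.finrank ℝ E - 2) * η (‖x - y‖ ^ 2) +
      2 * η' (‖x - y‖ ^ 2) * ‖x - y‖ ^ 2) * energyForm (g x) 1 -
      4 * η' (‖x - y‖ ^ 2) * ‖g x (x - y)‖ ^ 2) ∂μ = 0 := by
  let X (x : E) := η (‖x - y‖ ^ 2) • (x - y)
  have hXs : tsupport X ⊆ {x | ‖x - y‖ ^ 2 ≤ b} := by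
    refine closure_minimal (fun x hx => ?_) (isClosed_le (by fun_prop) continuous_const)
    by_contra hbx
    exact left_ne_zero_of_smul hx (hη0 _ (not_le.1 hbx).le)
  have hball : {x | ‖x - y‖ ^ 2 ≤ b} ⊆ ball y R := fun x hx =>
    mem_ball_iff_norm.2 (lt_of_pow_lt_pow_left₀ 2 hR.le (hx.trans_lt hb))
  have hXc : HasCompactSupport X := isCompact_of_isClosed_isBounded (isClosed_tsupport X)
    (isBounded_ball.subset (hXs.trans hball))
  have hX : ContDiff ℝ ∞ X :=
    (hη.comp ((contDiff_id.sub contDiff_const).norm_sq ℝ)).smul (contDiff_id.sub contDiff_const)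
  rw [← hg.integral_energyVariation_eq_zero X hX hXc (hXs.trans hball)]
  congr! 2 with x
  rw [(hasFDerivAt_radialField (hη' _)).fderiv,
    energyForm_energyVariation_smul_one_add_smul_rankOne]
  ring

end RadialField

section RadialVariation

theorem intervalIntegral_eq_zero_of_forall_ge {θ : ℝ → ℝ} {b s : ℝ} (hθ : ∀ t, b ≤ t → θ t = 0)
    (hs : b ≤ s) : ∫ t in s..b, θ t = 0 :=
  intervalIntegral.integral_zero_ae (.of_forall fun t ht => hθ t (uIoc_of_ge hs ▸ ht).1.le)

variable {E F : Type*} [NormedAddCommGroup E] [InnerProductSpace ℝ E] [FiniteDimensional ℝ E]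
  [NormedAddCommGroup F] [InnerProductSpace ℝ F] [FiniteDimensional ℝ F]

/-- The integrand of the first variation of the energy along the radial field
`η(|x - y|²) (x - y)` with profile `η(s) = ∫_s^b θ`. -/
def radialVariation (g : E → E →L[ℝ] F) (y : E) (b : ℝ) (θ : ℝ → ℝ) (x : E) : ℝ :=
  ((Module.finrank ℝ E - 2) * (∫ t in (‖x - y‖ ^ 2)..b, θ t) -
      2 * ‖x - y‖ ^ 2 * θ (‖x - y‖ ^ 2)) * energyForm (g x) 1 +
    4 * θ (‖x - y‖ ^ 2) * ‖g x (x - y)‖ ^ 2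

theorem norm_apply_sq_le_energyForm_one (A : E →L[ℝ] F) (v : E) :
    ‖A v‖ ^ 2 ≤ ‖v‖ ^ 2 * energyForm A 1 := by
  rw [← energyForm_rankOne, sq ‖v‖, ← InnerProductSpace.norm_rankOne (𝕜 := ℝ) v v]
  exact (le_abs_self _).trans (abs_energyForm_le A _)

theorem abs_radialVariation_le (g : E → E →L[ℝ] F) (y : E) (b : ℝ) {θ : ℝ → ℝ} {C : ℝ}
    (hθ : ∀ t, |θ t| ≤ C) (x : E) :
    |radialVariation g y b θ x| ≤ (|(Module.finrank ℝ E - 2 : ℝ)| * (C * |b - ‖x - y‖ ^ 2|) +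
      6 * C * ‖x - y‖ ^ 2) * energyForm (g x) 1 := by
  have he := energyForm_one_nonneg (g x)
  have hC : 0 ≤ C := (abs_nonneg _).trans (hθ 0)
  have hprim : |∫ t in (‖x - y‖ ^ 2)..b, θ t| ≤ C * |b - ‖x - y‖ ^ 2| :=
    intervalIntegral.norm_integral_le_of_norm_le_const (f := θ) fun t _ => hθ t
  have hθx := hθ (‖x - y‖ ^ 2)
  have hg := norm_apply_sq_le_energyForm_one (g x) (x - y)
  calc |radialVariation g y b θ x|
      ≤ (|(Module.finrank ℝ E - 2 : ℝ)| * |∫ t in (‖x - y‖ ^ 2)..b, θ t| +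
          2 * ‖x - y‖ ^ 2 * |θ (‖x - y‖ ^ 2)|) * energyForm (g x) 1 +
        4 * |θ (‖x - y‖ ^ 2)| * ‖g x (x - y)‖ ^ 2 := by
        refine (abs_add_le _ _).trans (add_le_add ?_ (by simp [abs_mul]))
        rw [abs_mul, abs_of_nonneg he]
        gcongr
        exact (abs_sub _ _).trans (by simp [abs_mul])
    _ ≤ (|(Module.finrank ℝ E - 2 : ℝ)| * (C * |b - ‖x - y‖ ^ 2|) +
          2 * ‖x - y‖ ^ 2 * C) * energyForm (g x) 1 +
        4 * C * (‖x - y‖ ^ 2 * energyForm (g x) 1) := by gcongr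
    _ = _ := by ring

theorem tendsto_radialVariation (g : E → E →L[ℝ] F) (y : E) (b : ℝ) {θ : ℕ → ℝ → ℝ} {θ' : ℝ → ℝ}
    (hθ : ∀ k, Continuous (θ k)) {C : ℝ} (hC : ∀ k t, |θ k t| ≤ C)
    (hlim : ∀ t, Tendsto (fun k => θ k t) atTop (𝓝 (θ' t))) (x : E) :
    Tendsto (fun k => radialVariation g y b (θ k) x) atTop (𝓝 (radialVariation g y b θ' x)) := by
  have hprim : Tendsto (fun k => ∫ t in (‖x - y‖ ^ 2)..b, θ k t) atTop
      (𝓝 (∫ t in (‖x - y‖ ^ 2)..b, θ' t)) :=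
    intervalIntegral.tendsto_integral_filter_of_dominated_convergence (fun _ => C)
      (.of_forall fun k => (hθ k).aestronglyMeasurable)
      (.of_forall fun k => .of_forall fun t _ => hC k t) intervalIntegrable_const
      (.of_forall fun t _ => hlim t)
  have hθx := hlim (‖x - y‖ ^ 2)
  exact (((hprim.const_mul _).sub (hθx.const_mul _)).mul_const _).add
    ((hθx.const_mul 4).mul_const _)

variable [MeasurableSpace E] {μ : Measure E} {g : E → E →L[ℝ] F} {y : E} {R b : ℝ}

theorem IsStationaryOn.integral_radialVariation_eq_zero (hg : IsStationaryOn μ g (ball y R))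
    (hR : 0 < R) (hb : b < R ^ 2) {θ : ℝ → ℝ} (hθ : ContDiff ℝ ∞ θ)
    (hθ0 : ∀ s, b ≤ s → θ s = 0) : ∫ x in ball y R, radialVariation g y b θ x ∂μ = 0 := by
  have hderiv (s : ℝ) : HasDerivAt (fun s => ∫ t in s..b, θ t) (-θ s) s :=
    intervalIntegral.integral_hasDerivAt_left (hθ.continuous.intervalIntegrable _ _)
      hθ.continuous.stronglyMeasurable.stronglyMeasurableAtFilter hθ.continuous.continuousAt
  have hη : ContDiff ℝ ∞ fun s => ∫ t in s..b, θ t := by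
    rw [contDiff_infty_iff_deriv, funext fun s => (hderiv s).deriv]
    exact ⟨fun s => (hderiv s).differentiableAt, hθ.neg⟩
  rw [← hg.integral_radialField_eq_zero hR hη hderiv hb
    fun s hs => intervalIntegral_eq_zero_of_forall_ge hθ0 hs]
  congr! 2 with x
  rw [radialVariation]
  ring

theorem IsStationaryOn.integral_radialVariation_eq_zero_of_tendsto [BorelSpace E]
    (hg : IsStationaryOn μ g (ball y R)) (hR : 0 < R) (hb : b < R ^ 2) {θ : ℕ → ℝ → ℝ}
    {θ' : ℝ → ℝ} (hθ : ∀ k, ContDiff ℝ ∞ (θ k)) (hθ0 : ∀ k s, b ≤ s → θ k s = 0) {C : ℝ}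
    (hC : ∀ k t, |θ k t| ≤ C) (hlim : ∀ t, Tendsto (fun k => θ k t) atTop (𝓝 (θ' t))) :
    ∫ x in ball y R, radialVariation g y b θ' x ∂μ = 0 := by
  have hC0 : 0 ≤ C := (abs_nonneg _).trans (hC 0 0)
  have he := hg.integrableOn_energyForm_one
  have hgx : AEStronglyMeasurable (fun x => g x (x - y)) (μ.restrict (ball y R)) :=
    isBoundedBilinearMap_apply.continuous.comp_aestronglyMeasurable (hg.aestronglyMeasurable.prodMk
      (continuous_id.sub continuous_const).aestronglyMeasurable)
  have hmeas (k) : AEStronglyMeasurable (radialVariation g y b (θ k)) (μ.restrict (ball y R)) := by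
    have hs : Continuous fun x : E => ‖x - y‖ ^ 2 := by fun_prop
    have hθs := (hθ k).continuous.comp hs
    have hprim : Continuous fun x : E => ∫ t in (‖x - y‖ ^ 2)..b, θ k t := by
      simp_rw [intervalIntegral.integral_symm b]
      exact ((intervalIntegral.continuous_primitive
        (fun _ _ => (hθ k).continuous.intervalIntegrable _ _) b).comp hs).neg
    exact ((((hprim.const_mul _).sub ((hs.const_mul _).mul hθs)).aestronglyMeasurable).mul
      he.aestronglyMeasurable).add ((hθs.const_mul 4).aestronglyMeasurable.mul (hgx.norm.pow 2))
  refine tendsto_nhds_unique (tendsto_integral_of_dominated_convergence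
    (fun x => (|(Module.finrank ℝ E - 2 : ℝ)| * (C * (|b| + R ^ 2)) + 6 * C * R ^ 2) *
      energyForm (g x) 1) hmeas (he.const_mul _) (fun k => ?_)
    (.of_forall (tendsto_radialVariation g y b (fun k => (hθ k).continuous) hC hlim))) ?_
  · filter_upwards [ae_restrict_mem measurableSet_ball] with x hx
    have hxR : ‖x - y‖ ^ 2 ≤ R ^ 2 := by gcongr; exact (mem_ball_iff_norm.1 hx).le
    have hbs : |b - ‖x - y‖ ^ 2| ≤ |b| + R ^ 2 := (abs_sub _ _).trans (by simpa using hxR)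
    have hex := energyForm_one_nonneg (g x)
    exact (abs_radialVariation_le g y b (hC k) x).trans (by gcongr)
  · simpa only [hg.integral_radialVariation_eq_zero hR hb (hθ _) (hθ0 _)] using tendsto_const_nhds

end RadialVariation

section Cutoff

open Real (smoothTransition)

/-- Smooth functions with values in `[0, 1]` that, for `ε > 0`, converge pointwise to the indicator
of `[a, b)` as `k → ∞` and have their supports in `(a - ε, b)`. -/
def smoothIndicatorIco (a b ε : ℝ) (k : ℕ) (s : ℝ) : ℝ :=
  smoothTransition ((k + 1) / ε * (s - a) + 1) * smoothTransition (k * (b - s))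

variable {a b ε : ℝ} {k : ℕ} {s : ℝ}

theorem contDiff_smoothIndicatorIco : ContDiff ℝ ∞ (smoothIndicatorIco a b ε k) :=
  (smoothTransition.contDiff.comp (by fun_prop)).mul (smoothTransition.contDiff.comp (by fun_prop))

theorem abs_smoothIndicatorIco_le_one : |smoothIndicatorIco a b ε k s| ≤ 1 := by
  rw [smoothIndicatorIco,
    abs_of_nonneg (mul_nonneg (smoothTransition.nonneg _) (smoothTransition.nonneg _))]
  exact mul_le_one₀ (smoothTransition.le_one _) (smoothTransition.nonneg _)
    (smoothTransition.le_one _)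

theorem support_smoothIndicatorIco_subset (hε : 0 < ε) :
    Function.support (smoothIndicatorIco a b ε k) ⊆ Ioo (a - ε) b := by
  intro s hs
  have hleft : 0 < (k + 1) / ε * (s - a) + 1 := not_le.1 fun h =>
    left_ne_zero_of_mul hs (smoothTransition.zero_of_nonpos h)
  have hright : 0 < k * (b - s) := not_le.1 fun h =>
    right_ne_zero_of_mul hs (smoothTransition.zero_of_nonpos h)
  refine ⟨?_, sub_pos.1 (pos_of_mul_pos_right hright k.cast_nonneg)⟩
  by_contra! hsa
  have hmul : (k + 1) / ε * (s - a) ≤ (k + 1) / ε * -ε := by gcongr; linarith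
  rw [mul_neg, div_mul_cancel₀ _ hε.ne'] at hmul
  linarith [k.cast_nonneg (α := ℝ)]

theorem tendsto_smoothIndicatorIco (a b : ℝ) (hε : 0 < ε) (s : ℝ) :
    Tendsto (fun k => smoothIndicatorIco a b ε k s) atTop (𝓝 ((Ico a b).indicator 1 s)) := by
  refine EventuallyEq.tendsto ?_
  have hdiv : Tendsto (fun k : ℕ => ((k : ℝ) + 1) / ε) atTop atTop :=
    (tendsto_atTop_add_const_right _ 1 tendsto_natCast_atTop_atTop).atTop_div_const hε
  rcases lt_or_ge s a with hsa | hsa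
  · have hleft := tendsto_atBot_add_const_right _ 1 (hdiv.atTop_mul_const_of_neg (sub_neg.2 hsa))
    filter_upwards [hleft.eventually_le_atBot 0] with k hk
    have hs : s ∉ Ico a b := fun hs => hsa.not_ge hs.1
    rw [smoothIndicatorIco, smoothTransition.zero_of_nonpos hk, zero_mul, indicator_of_notMem hs]
  have hleft (k : ℕ) : smoothTransition ((k + 1) / ε * (s - a) + 1) = 1 :=
    smoothTransition.one_of_one_le <|
      le_add_of_nonneg_left (mul_nonneg (by positivity) (sub_nonneg.2 hsa))
  rcases lt_or_ge s b with hsb | hsb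
  · have hright : Tendsto (fun k : ℕ => k * (b - s)) atTop atTop :=
      tendsto_natCast_atTop_atTop.atTop_mul_const (sub_pos.2 hsb)
    filter_upwards [hright.eventually_ge_atTop 1] with k hk
    rw [smoothIndicatorIco, hleft, smoothTransition.one_of_one_le hk, one_mul,
      indicator_of_mem (mem_Ico.2 ⟨hsa, hsb⟩), Pi.one_apply]
  · refine .of_forall fun k => ?_
    have hright : k * (b - s) ≤ 0 :=
      mul_nonpos_of_nonneg_of_nonpos k.cast_nonneg (sub_nonpos.2 hsb)
    have hs : s ∉ Ico a b := fun hs => hsb.not_gt hs.2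
    simp only [smoothIndicatorIco, smoothTransition.zero_of_nonpos hright, mul_zero,
      indicator_of_notMem hs]

end Cutoff

section Primitive

theorem integral_half_rpow (d : ℝ) {c b : ℝ} (hc : 0 < c) (hcb : c ≤ b) :
    (d - 2) * ∫ t in c..b, t ^ (-d / 2) / 2 = c ^ (1 - d / 2) - b ^ (1 - d / 2) := by
  have hpos (t) (ht : t ∈ uIcc c b) : 0 < t := hc.trans_le (uIcc_of_le hcb ▸ ht).1
  have hderiv (t) (ht : t ∈ uIcc c b) :
      HasDerivAt (fun t : ℝ => -t ^ (1 - d / 2)) ((d - 2) * (t ^ (-d / 2) / 2)) t := by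
    refine (Real.hasDerivAt_rpow_const (.inl (hpos t ht).ne')).neg.congr_deriv ?_
    rw [show 1 - d / 2 - 1 = -d / 2 by ring]
    ring
  have hint : IntervalIntegrable (fun t : ℝ => (d - 2) * (t ^ (-d / 2) / 2)) volume c b :=
    ((intervalIntegral.intervalIntegrable_rpow
      (.inr fun h0 => (hpos 0 h0).false)).div_const 2).const_mul _
  rw [← intervalIntegral.integral_const_mul,
    intervalIntegral.integral_eq_sub_of_hasDerivAt hderiv hint]
  ring

theorem intervalIntegral_indicator_Ico (f : ℝ → ℝ) {a b s : ℝ} (hab : a ≤ b) (hsb : s ≤ b) :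
    ∫ t in s..b, (Ico a b).indicator f t = ∫ t in (max s a)..b, f t := by
  rw [intervalIntegral.integral_of_le hsb, intervalIntegral.integral_of_le (max_le hsb hab),
    ← integral_Ico_eq_integral_Ioc, ← integral_Ico_eq_integral_Ioc,
    setIntegral_indicator measurableSet_Ico, Ico_inter_Ico, min_self]

end Primitive

section Monotonicity

variable {E F : Type*} [NormedAddCommGroup E] [InnerProductSpace ℝ E] [NormedAddCommGroup F]
  [InnerProductSpace ℝ F]

/-- The squared radial derivative `|∂u/∂r|²` about `y` of a map with gradient `g`. It vanishes at
`y`, where the radial direction is undefined. -/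
def radialEnergyDensity (g : E → E →L[ℝ] F) (y x : E) : ℝ :=
  ‖g x (‖x - y‖⁻¹ • (x - y))‖ ^ 2

theorem radialEnergyDensity_eq (g : E → E →L[ℝ] F) (y x : E) :
    radialEnergyDensity g y x = (‖x - y‖ ^ 2)⁻¹ * ‖g x (x - y)‖ ^ 2 := by
  rw [radialEnergyDensity, map_smul, norm_smul, mul_pow, norm_inv, norm_norm, inv_pow]

variable [FiniteDimensional ℝ E] [FiniteDimensional ℝ F]

theorem radialEnergyDensity_le_energyForm_one (g : E → E →L[ℝ] F) (y x : E) :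
    radialEnergyDensity g y x ≤ energyForm (g x) 1 := by
  rw [radialEnergyDensity_eq]
  refine inv_mul_le_of_le_mul₀ (sq_nonneg _) (energyForm_one_nonneg _) ?_
  exact norm_apply_sq_le_energyForm_one (g x) (x - y)

theorem sq_rpow_one_sub_div_two {r : ℝ} (hr : 0 ≤ r) (d : ℝ) :
    (r ^ 2) ^ (1 - d / 2) = r ^ (2 - d) := by
  rw [← Real.rpow_natCast_mul hr]
  congr 1
  push_cast
  ring

theorem sq_rpow_neg_div_two {r : ℝ} (hr : 0 < r) (d : ℝ) :
    (r ^ 2) ^ (-d / 2) = r ^ (2 - d) * (r ^ 2)⁻¹ := by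
  rw [← sq_rpow_one_sub_div_two hr.le, show 1 - d / 2 = -d / 2 + 1 by ring,
    Real.rpow_add_one (by positivity), mul_inv_cancel_right₀ (by positivity)]

theorem radialVariation_indicator_rpow (g : E → E →L[ℝ] F) (y : E) {σ ρ : ℝ} (hσ : 0 < σ)
    (hσρ : σ ≤ ρ) (x : E) :
    radialVariation g y (ρ ^ 2) ((Ico (σ ^ 2) (ρ ^ 2)).indicator
      fun t => t ^ (-(Module.finrank ℝ E : ℝ) / 2) / 2) x =
      (ball y σ).indicator (fun x => σ ^ (2 - Module.finrank ℝ E : ℝ) * energyForm (g x) 1) x -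
      (ball y ρ).indicator (fun x => ρ ^ (2 - Module.finrank ℝ E : ℝ) * energyForm (g x) 1) x +
      (ball y ρ \ ball y σ).indicator (fun x =>
        2 * (‖x - y‖ ^ (2 - Module.finrank ℝ E : ℝ) * radialEnergyDensity g y x)) x := by
  have hρ : 0 < ρ := hσ.trans_le hσρ
  have hsq : σ ^ 2 ≤ ρ ^ 2 := by gcongr
  have hσ2 : 0 < σ ^ 2 := by positivity
  rw [radialVariation]
  rcases lt_or_ge ‖x - y‖ σ with hxσ | hxσ
  · have hs : ‖x - y‖ ^ 2 < σ ^ 2 := by gcongr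
    have hx : x ∈ ball y σ := mem_ball_iff_norm.2 hxσ
    rw [intervalIntegral_indicator_Ico _ hsq (hs.le.trans hsq), max_eq_right hs.le,
      integral_half_rpow _ hσ2 hsq, sq_rpow_one_sub_div_two hσ.le, sq_rpow_one_sub_div_two hρ.le,
      indicator_of_notMem fun h => hs.not_ge (mem_Ico.1 h).1, indicator_of_mem hx,
      indicator_of_mem (ball_subset_ball hσρ hx), indicator_of_notMem fun h => h.2 hx]
    ring
  have hxσ' : x ∉ ball y σ := fun h => hxσ.not_gt (mem_ball_iff_norm.1 h)
  rcases lt_or_ge ‖x - y‖ ρ with hxρ | hxρ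
  · have hr : 0 < ‖x - y‖ := hσ.trans_le hxσ
    have hs : ‖x - y‖ ^ 2 ∈ Ico (σ ^ 2) (ρ ^ 2) := ⟨by gcongr, by gcongr⟩
    have hx : x ∈ ball y ρ := mem_ball_iff_norm.2 hxρ
    have hxd : x ∈ ball y ρ \ ball y σ := ⟨hx, hxσ'⟩
    rw [intervalIntegral_indicator_Ico _ hsq hs.2.le, max_eq_left hs.1,
      integral_half_rpow _ (hσ2.trans_le hs.1) hs.2.le, indicator_of_mem hs,
      indicator_of_notMem hxσ', indicator_of_mem hx, indicator_of_mem hxd,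
      sq_rpow_one_sub_div_two hr.le, sq_rpow_one_sub_div_two hρ.le, sq_rpow_neg_div_two hr,
      radialEnergyDensity_eq]
    field_simp
    ring
  · have hθ (t : ℝ) (ht : ρ ^ 2 ≤ t) : (Ico (σ ^ 2) (ρ ^ 2)).indicator
        (fun t => t ^ (-(Module.finrank ℝ E : ℝ) / 2) / 2) t = 0 :=
      indicator_of_notMem (fun h => ht.not_gt h.2) _
    have hs : ρ ^ 2 ≤ ‖x - y‖ ^ 2 := by gcongr
    have hx : x ∉ ball y ρ := fun h => hxρ.not_gt (mem_ball_iff_norm.1 h)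
    rw [intervalIntegral_eq_zero_of_forall_ge hθ hs, hθ _ hs, indicator_of_notMem hxσ',
      indicator_of_notMem hx, indicator_of_notMem fun h => hx h.1]
    ring

variable [MeasurableSpace E] [BorelSpace E] {μ : Measure E} {g : E → E →L[ℝ] F} {y : E} {R : ℝ}

theorem IsStationaryOn.integral_radialVariation_indicator_eq_zero
    (hg : IsStationaryOn μ g (ball y R)) (hR : 0 < R) {a b : ℝ} (ha : 0 < a) (hb : b < R ^ 2)
    {w : ℝ → ℝ} (hw : ContDiffOn ℝ ∞ w (Ioi 0)) :
    ∫ x in ball y R, radialVariation g y b ((Ico a b).indicator w) x ∂μ = 0 := by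
  let χ := smoothIndicatorIco a b (a / 2)
  have hsupp (k) : Function.support (χ k) ⊆ Icc (a / 2) b :=
    (support_smoothIndicatorIco_subset (half_pos ha)).trans
      (Ioo_subset_Icc_self.trans_eq (by rw [sub_half]))
  have hpos : Icc (a / 2) b ⊆ Ioi 0 := fun t ht => (half_pos ha).trans_le ht.1
  obtain ⟨C, hC⟩ := isCompact_Icc.exists_bound_of_continuousOn (hw.continuousOn.mono hpos)
  refine hg.integral_radialVariation_eq_zero_of_tendsto hR hb (θ := fun k t => χ k t * w t)
    (C := max C 0)
    (fun k => contMDiff_iff_contDiff.1 <| contMDiff_of_tsupport fun t ht => ?_)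
    (fun k t ht => ?_) (fun k t => ?_) fun t => ?_
  · have ht0 : 0 < t := hpos (closure_minimal (hsupp k) isClosed_Icc
      (closure_mono (Function.support_mul_subset_left _ _) ht))
    exact (contDiff_smoothIndicatorIco.contDiffAt.mul
      (hw.contDiffAt (Ioi_mem_nhds ht0))).contMDiffAt
  · have hχ : χ k t = 0 := Function.notMem_support.1 fun h =>
      ht.not_gt (support_smoothIndicatorIco_subset (half_pos ha) h).2
    rw [hχ, zero_mul]
  · by_cases ht : t ∈ Function.support (χ k)
    · rw [abs_mul]
      exact (mul_le_of_le_one_left (abs_nonneg _) abs_smoothIndicatorIco_le_one).trans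
        ((hC t (hsupp k ht)).trans (le_max_left _ _))
    · rw [Function.notMem_support.1 ht, zero_mul, abs_zero]
      exact le_max_right _ _
  · simpa only [← indicator_mul_left, Pi.one_apply, one_mul] using
      (tendsto_smoothIndicatorIco a b (half_pos ha) t).mul_const (w t)

theorem IsStationaryOn.integrableOn_radialEnergyDensity (hg : IsStationaryOn μ g (ball y R)) :
    IntegrableOn (radialEnergyDensity g y) (ball y R) μ := by
  have hmeas : AEStronglyMeasurable (fun x => g x (‖x - y‖⁻¹ • (x - y)))
      (μ.restrict (ball y R)) :=
    isBoundedBilinearMap_apply.continuous.comp_aestronglyMeasurable (hg.aestronglyMeasurable.prodMk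
      (by fun_prop : Measurable fun x : E => ‖x - y‖⁻¹ • (x - y)).aestronglyMeasurable)
  refine hg.integrableOn_energyForm_one.mono' (hmeas.norm.pow 2) (.of_forall fun x => ?_)
  exact (Real.norm_of_nonneg (sq_nonneg _)).trans_le (radialEnergyDensity_le_energyForm_one g y x)

theorem IsStationaryOn.integrableOn_rpow_mul_radialEnergyDensity
    (hg : IsStationaryOn μ g (ball y R)) {σ ρ : ℝ} (hσ : 0 < σ) (hρ : ρ < R) (q : ℝ) :
    IntegrableOn (fun x => ‖x - y‖ ^ q * radialEnergyDensity g y x) (ball y ρ \ ball y σ) μ := by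
  have hK : IsCompact (closedBall y ρ \ ball y σ) := (isCompact_closedBall y ρ).diff isOpen_ball
  have hcont : ContinuousOn (fun x => ‖x - y‖ ^ q) (closedBall y ρ \ ball y σ) := by
    refine ContinuousOn.rpow_const (by fun_prop) fun x hx => .inl (ne_of_gt ?_)
    exact hσ.trans_le (not_lt.1 fun h => hx.2 (mem_ball_iff_norm.2 h))
  exact ((hg.integrableOn_radialEnergyDensity.mono_set
    (sdiff_subset.trans (closedBall_subset_ball hρ))).continuousOn_mul hcont hK).mono_set
      (sdiff_subset_sdiff_left ball_subset_closedBall)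

theorem IsStationaryOn.monotonicity_identity (hg : IsStationaryOn μ g (ball y R)) {σ ρ : ℝ}
    (hσ : 0 < σ) (hσρ : σ ≤ ρ) (hρ : ρ < R) :
    ρ ^ (2 - Module.finrank ℝ E : ℝ) * (∫ x in ball y ρ, energyForm (g x) 1 ∂μ) -
      σ ^ (2 - Module.finrank ℝ E : ℝ) * (∫ x in ball y σ, energyForm (g x) 1 ∂μ) =
      2 * ∫ x in ball y ρ \ ball y σ,
        ‖x - y‖ ^ (2 - Module.finrank ℝ E : ℝ) * radialEnergyDensity g y x ∂μ := by
  have hρ0 : 0 < ρ := hσ.trans_le hσρ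
  have hρR : ball y ρ ⊆ ball y R := ball_subset_ball hρ.le
  have hσR : ball y σ ⊆ ball y R := ball_subset_ball (hσρ.trans hρ.le)
  have hdR : ball y ρ \ ball y σ ⊆ ball y R := sdiff_subset.trans hρR
  have henergy (r : ℝ) : IntegrableOn ((ball y r).indicator fun x =>
      r ^ (2 - Module.finrank ℝ E : ℝ) * energyForm (g x) 1) (ball y R) μ :=
    (hg.integrableOn_energyForm_one.const_mul _).indicator measurableSet_ball
  have hradial : IntegrableOn ((ball y ρ \ ball y σ).indicator fun x =>
      2 * (‖x - y‖ ^ (2 - Module.finrank ℝ E : ℝ) * radialEnergyDensity g y x)) (ball y R) μ :=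
    ((integrable_indicator_iff (measurableSet_ball.diff measurableSet_ball)).2
      ((hg.integrableOn_rpow_mul_radialEnergyDensity hσ hρ _).const_mul 2)).restrict
  have hw : ContDiffOn ℝ ∞ (fun t : ℝ => t ^ (-(Module.finrank ℝ E : ℝ) / 2) / 2) (Ioi 0) :=
    (contDiffOn_id.rpow_const_of_ne fun t ht => ne_of_gt ht).div_const 2
  have hzero := hg.integral_radialVariation_indicator_eq_zero (hρ0.trans hρ) (a := σ ^ 2)
    (b := ρ ^ 2) (by positivity) (by gcongr) hw
  simp_rw [radialVariation_indicator_rpow g y hσ hσρ] at hzero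
  rw [integral_add, integral_sub, setIntegral_indicator measurableSet_ball,
    setIntegral_indicator measurableSet_ball,
    setIntegral_indicator (measurableSet_ball.diff measurableSet_ball),
    inter_eq_right.2 hσR, inter_eq_right.2 hρR, inter_eq_right.2 hdR,
    integral_const_mul, integral_const_mul, integral_const_mul] at hzero
  · linarith
  exacts [henergy σ, henergy ρ, (henergy σ).sub (henergy ρ), hradial]

theorem monotonicity_formula_general (hg : IsStationaryOn μ g (ball y R)) :
    (∀ σ ρ : ℝ, 0 < σ → σ < ρ → ρ < R →
      ρ ^ (2 - Module.finrank ℝ E : ℝ) * (∫ x in ball y ρ, energyForm (g x) 1 ∂μ) -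
        σ ^ (2 - Module.finrank ℝ E : ℝ) * (∫ x in ball y σ, energyForm (g x) 1 ∂μ) =
        2 * ∫ x in ball y ρ \ ball y σ,
          ‖x - y‖ ^ (2 - Module.finrank ℝ E : ℝ) * ‖g x (‖x - y‖⁻¹ • (x - y))‖ ^ 2 ∂μ) ∧
      MonotoneOn (fun ρ : ℝ => ρ ^ (2 - Module.finrank ℝ E : ℝ) *
        ∫ x in ball y ρ, energyForm (g x) 1 ∂μ) (Ioo 0 R) := by
  refine ⟨fun σ ρ hσ hσρ hρ => hg.monotonicity_identity hσ hσρ.le hρ,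
    fun σ hσ ρ hρ hσρ => sub_nonneg.1 ?_⟩
  rw [hg.monotonicity_identity hσ.1 hσρ hρ.2]
  exact mul_nonneg two_pos.le (integral_nonneg fun x => mul_nonneg
    (Real.rpow_nonneg (norm_nonneg _) _) (sq_nonneg _))

end Monotonicity

/-- Theorem 1 of the paper (the monotonicity formula), for energy minimizing maps into
the unit sphere: for every `y ∈ Ω` and `ρ₀ > 0` with `B̄_{ρ₀}(y) ⊆ Ω` and every
`0 < σ < ρ < ρ₀`, the monotonicity identity holds; in particular the scaled energy
`ρ ↦ ρ^(2-n) ∫_{B_ρ(y)} |Du|²` is monotone nondecreasing on `(0, ρ₀)`. -/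
theorem monotonicity_formula
    (n p : ℕ) (hn : 2 ≤ n) (hp : 2 ≤ p)
    (Ω : Set (EuclideanSpace ℝ (Fin n))) (hΩ : IsOpen Ω)
    (u : EuclideanSpace ℝ (Fin n) → EuclideanSpace ℝ (Fin p))
    (g : EuclideanSpace ℝ (Fin n) →
      (EuclideanSpace ℝ (Fin n) →L[ℝ] EuclideanSpace ℝ (Fin p)))
    (hu : IsEnergyMinimizingToSphere n p Ω u g) :
    ∀ y ∈ Ω, ∀ ρ₀ : ℝ, 0 < ρ₀ → closedBall y ρ₀ ⊆ Ω →
      (∀ σ ρ : ℝ, 0 < σ → σ < ρ → ρ < ρ₀ →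
        ρ ^ ((2 : ℝ) - n) * (∫ x in ball y ρ, energyDensity n p g x) -
          σ ^ ((2 : ℝ) - n) * (∫ x in ball y σ, energyDensity n p g x) =
        2 * ∫ x in ball y ρ \ ball y σ,
          ‖x - y‖ ^ ((2 : ℝ) - n) * ‖g x (‖x - y‖⁻¹ • (x - y))‖ ^ 2) ∧
      MonotoneOn
        (fun ρ : ℝ => ρ ^ ((2 : ℝ) - n) * ∫ x in ball y ρ, energyDensity n p g x)
        (Ioo 0 ρ₀) := by
  intro y _ ρ₀ hρ₀ hB
  simpa only [energyDensity_eq_energyForm, finrank_euclideanSpace_fin] using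
    monotonicity_formula_general (hu.isStationaryOn hΩ hρ₀ hB)
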